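/- Let X be a real-valued random variable with cdf G. Then for every u ∈ [0,1], E[J_G(X, u)] = u. -/

import Mathlib

/-!
Write `L x` for the left limit of `G` at `x`, and let `0 < u < 1` (for `u = 1` the integrand is
identically `1`; for `u = 0` it vanishes off `{G ≤ 0}`). Let `q = inf {x | u ≤ G x}` be the lower
`u`-quantile, so that `L q ≤ u ≤ G q`. Then `J_G(x, u) = 1` for `x < q`, and `J_G(x, u) = 0` for
`x > q` unless `G x ≤ u ≤ G q`. Since `μ {G ≤ u} ≤ u` (`measure_cdf_le`), the exceptional set
`{x > q, G x ≤ u}` is null, and the expectation equals `L q + ΔG(q) * J_G(q, u) = u`.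
-/

open MeasureTheory ProbabilityTheory Filter Set

noncomputable section

/-- `D(u) = min(1, max(0,u))`, the cdf of the uniform distribution on `(0,1)`. -/
def unifD (u : ℝ) : ℝ := min 1 (max 0 u)

/-- The jump `ΔG(x) = G(x) - G(x-)` of a function `G` at `x`. -/
def jump (G : ℝ → ℝ) (x : ℝ) : ℝ := G x - Function.leftLim G x

/-- `J_G(x,u)`. -/
def JG (G : ℝ → ℝ) (x u : ℝ) : ℝ :=
  if 0 < jump G x then unifD ((u - Function.leftLim G x) / jump G x)
  else if G x ≤ u then 1 else 0

/-- `P(G(X) ≤ u) ≤ u`. By inner regularity it suffices to bound `μ K` for compact `K ⊆ {G ≤ u}`;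
such a `K` has a largest element `m`, whence `μ K ≤ G m ≤ u`. -/
lemma measure_cdf_le (μ : Measure ℝ) [IsProbabilityMeasure μ] (u : ℝ) :
    μ {x | cdf μ x ≤ u} ≤ ENNReal.ofReal u := by
  have hm : MeasurableSet {x | cdf μ x ≤ u} :=
    measurableSet_le (monotone_cdf μ).measurable measurable_const
  rw [hm.measure_eq_iSup_isCompact]
  refine iSup₂_le fun K hK => iSup_le fun hc => ?_
  rcases K.eq_empty_or_nonempty with rfl | hne
  · simp
  obtain ⟨m, hmK, hmax⟩ := hc.exists_isGreatest hne
  calc μ K ≤ μ (Iic m) := measure_mono fun x hx => hmax hx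
    _ = ENNReal.ofReal (cdf μ m) := (ofReal_cdf μ m).symm
    _ ≤ ENNReal.ofReal u := ENNReal.ofReal_le_ofReal (hK hmK)

lemma unifD_eq_one {x : ℝ} (h : 1 ≤ x) : unifD x = 1 := by
  unfold unifD; exact min_eq_left (h.trans (le_max_right _ _))

lemma unifD_eq_zero {x : ℝ} (h : x ≤ 0) : unifD x = 0 := by
  unfold unifD; rw [max_eq_left h]; norm_num

lemma unifD_eq_self {x : ℝ} (h : 0 ≤ x) (h1 : x ≤ 1) : unifD x = x := by
  unfold unifD; rw [max_eq_right h, min_eq_right h1]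

lemma JG_eq_one {G : ℝ → ℝ} {x u : ℝ} (h : G x ≤ u) : JG G x u = 1 := by
  unfold JG
  split_ifs with hj
  · apply unifD_eq_one
    rw [one_le_div hj]
    unfold jump; linarith
  · rfl

lemma JG_eq_zero {G : ℝ → ℝ} {x u : ℝ} (h : u ≤ Function.leftLim G x) (h' : u < G x) :
    JG G x u = 0 := by
  unfold JG
  rw [if_neg (not_le.mpr h')]
  split_ifs with hj
  · exact unifD_eq_zero (div_nonpos_of_nonpos_of_nonneg (by linarith) hj.le)
  · rfl

lemma leftLim_cdf_nonneg (μ : Measure ℝ) (x : ℝ) : 0 ≤ Function.leftLim (cdf μ) x :=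
  (cdf_nonneg μ (x - 1)).trans ((monotone_cdf μ).le_leftLim (by linarith))

/-- The lower `u`-quantile `q`: strictly to its left `G < u`, and `G(q-) ≤ u ≤ G(q)`. -/
lemma exists_quantile (μ : Measure ℝ) {u : ℝ} (h0 : 0 < u) (h1 : u < 1) :
    ∃ q, (∀ x < q, cdf μ x < u) ∧ u ≤ cdf μ q ∧ Function.leftLim (cdf μ) q ≤ u := by
  obtain ⟨a, ha⟩ := ((tendsto_cdf_atTop μ).eventually (lt_mem_nhds h1)).exists
  obtain ⟨b, hb⟩ := ((tendsto_cdf_atBot μ).eventually (gt_mem_nhds h0)).exists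
  have hbdd : BddBelow {x | u ≤ cdf μ x} := by
    refine ⟨b, fun x hx => ?_⟩
    by_contra! hlt
    have := monotone_cdf μ hlt.le
    have hx' : u ≤ cdf μ x := hx
    linarith
  have hlt : ∀ x < sInf {x | u ≤ cdf μ x}, cdf μ x < u := by
    intro x hx
    by_contra! h
    exact absurd (csInf_le hbdd h) (not_le.mpr hx)
  refine ⟨sInf {x | u ≤ cdf μ x}, hlt, ?_, ?_⟩
  · have hr := ((cdf μ).right_continuous (sInf {x | u ≤ cdf μ x})).mono Ioi_subset_Ici_self
    refine ge_of_tendsto hr.tendsto ?_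
    filter_upwards [self_mem_nhdsWithin] with x hx
    have hne : {x | u ≤ cdf μ x}.Nonempty := ⟨a, le_of_lt ha⟩
    obtain ⟨y, hy, hyx⟩ := exists_lt_of_csInf_lt hne hx
    exact le_trans hy (monotone_cdf μ hyx.le)
  · refine le_of_tendsto ((monotone_cdf μ).tendsto_leftLim _) ?_
    filter_upwards [self_mem_nhdsWithin] with x hx using (hlt x hx).le

/-- When `G(q-) ≤ u ≤ G(q)`, the weight `J_G(q, u)` splits the atom at `q` so that the masses
add up to `u`. -/
lemma leftLim_add_jump_mul_JG {G : ℝ → ℝ} {q u : ℝ} (h : Function.leftLim G q ≤ u)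
    (h' : u ≤ G q) : Function.leftLim G q + jump G q * JG G q u = u := by
  by_cases hj : 0 < jump G q
  · unfold JG
    rw [if_pos hj, unifD_eq_self (div_nonneg (by linarith) hj.le)
      ((div_le_one hj).mpr (by unfold jump; linarith)), mul_div_cancel₀ _ hj.ne']
    ring
  · have : jump G q = 0 := by unfold jump at *; linarith
    rw [this]
    unfold jump at this
    linarith

/-- If `X` is a real random variable with cdf `G` (i.e., `X` has law `μ` and
`G(x) = μ(-∞,x]`), then `E[J_G(X,u)] = u` for every `u ∈ [0,1]`. -/
theorem stmt2 (μ : Measure ℝ) [IsProbabilityMeasure μ]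
    (G : ℝ → ℝ) (hG : ∀ x, G x = (μ (Set.Iic x)).toReal) :
    ∀ u ∈ Set.Icc (0:ℝ) 1, ∫ x, JG G x u ∂μ = u := by
  obtain rfl : G = cdf μ := funext fun x => by rw [hG, cdf_eq_real]; rfl
  rintro u ⟨hu0, hu1⟩
  rcases hu1.eq_or_lt with rfl | hu1
  · simp [JG_eq_one (cdf_le_one μ _)]
  rcases hu0.eq_or_lt with rfl | hu0
  · apply integral_eq_zero_of_ae
    have hnull : μ {x | cdf μ x ≤ 0} = 0 := by simpa using measure_cdf_le μ 0
    filter_upwards [measure_eq_zero_iff_ae_notMem.mp hnull] with x hx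
    exact JG_eq_zero (leftLim_cdf_nonneg μ x) (not_le.mp hx)
  obtain ⟨q, hlt, hq, hL⟩ := exists_quantile μ hu0 hu1
  have hnull : μ ({x | cdf μ x ≤ u} \ Iic q) = 0 := by
    by_cases hqu : cdf μ q ≤ u
    · have hsub : Iic q ⊆ {x | cdf μ x ≤ u} := fun x hx => (monotone_cdf μ hx).trans hqu
      rw [measure_sdiff hsub measurableSet_Iic.nullMeasurableSet (measure_ne_top _ _),
        tsub_eq_zero_iff_le, ← ofReal_cdf μ q]
      exact (measure_cdf_le μ u).trans (ENNReal.ofReal_le_ofReal hq)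
    · have : {x | cdf μ x ≤ u} \ Iic q = ∅ := by
        refine eq_empty_of_forall_notMem fun x hx => hqu ?_
        exact (monotone_cdf μ (not_le.mp hx.2).le).trans hx.1
      simp [this]
  have hae : (fun x => JG (cdf μ) x u) =ᵐ[μ] fun x =>
      (Iio q).indicator (fun _ => (1 : ℝ)) x
        + ({q} : Set ℝ).indicator (fun _ => JG (cdf μ) q u) x := by
    filter_upwards [measure_eq_zero_iff_ae_notMem.mp hnull] with x hx
    rcases lt_trichotomy x q with h | rfl | h
    · simp [h, h.ne, JG_eq_one (hlt x h).le]
    · simp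
    · have hx' : u < cdf μ x := by
        by_contra! hle
        exact hx ⟨hle, not_le.mpr h⟩
      simp [h.le, h.ne', JG_eq_zero (hq.trans ((monotone_cdf μ).le_leftLim h)) hx']
  have hsing : μ.real {q} = jump (cdf μ) q := by
    have h := (cdf μ).measure_singleton q
    rw [measure_cdf] at h
    rw [measureReal_def, h, ENNReal.toReal_ofReal
      (sub_nonneg.mpr ((monotone_cdf μ).leftLim_le le_rfl)), jump]
  have hIio : μ.real (Iio q) = Function.leftLim (cdf μ) q := by
    have h := (cdf μ).measure_Iio (tendsto_cdf_atBot μ) q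
    rw [measure_cdf, sub_zero] at h
    rw [measureReal_def, h, ENNReal.toReal_ofReal (leftLim_cdf_nonneg μ q)]
  rw [integral_congr_ae hae, integral_add
    ((integrable_const _).indicator measurableSet_Iio)
    ((integrable_const _).indicator (measurableSet_singleton q)),
    integral_indicator_const _ measurableSet_Iio,
    integral_indicator_const _ (measurableSet_singleton q), hsing, hIio, smul_eq_mul, smul_eq_mul,
    mul_one]
  exact leftLim_add_jump_mul_JG hL hq
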